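/- arXiv:2307.15892 — 3 statements merged into one kernel-verified Lean document; each statement's English description precedes it below -/
import Mathlib

section
/- Let f: ℝ^d → ℝ be differentiable with a global minimizer x*, let (g(x))_{x∈ℝ^d} be a stochastic gradient family for f, and suppose (f, (g(x))) is L-λ(σ²) smooth for some L > 0, λ ≥ 0, σ² ≥ 0. Let σ_v² := inf_{x∈ℝ^d} E‖g(x) − ∇f(x)‖². Then for every x ∈ ℝ^d: f(x) − f(x*) ≥ (‖∇f(x)‖² − λ‖x − x*‖² − (σ² − σ_v²)) / (2L). -/
open MeasureTheory RealInnerProductSpace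

/-- Bias-variance decomposition: the second moment of the deviation of a square-integrable random
vector from its mean is its second moment minus the squared norm of its mean. -/
theorem integral_norm_sub_integral_sq {Ω E : Type*} [MeasurableSpace Ω] {μ : Measure Ω}
    [IsProbabilityMeasure μ] [NormedAddCommGroup E] [InnerProductSpace ℝ E] [CompleteSpace E]
    {X : Ω → E} (hX : MemLp X 2 μ) :
    ∫ ω, ‖X ω - ∫ ω', X ω' ∂μ‖ ^ 2 ∂μ = ∫ ω, ‖X ω‖ ^ 2 ∂μ - ‖∫ ω, X ω ∂μ‖ ^ 2 := by
  have hint : Integrable X μ := hX.integrable one_le_two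
  have hsq : Integrable (fun ω => ‖X ω‖ ^ 2) μ := hX.integrable_norm_pow two_ne_zero
  set m := ∫ ω, X ω ∂μ with hm
  have hinner : ∫ ω, ⟪X ω, m⟫ ∂μ = ‖m‖ ^ 2 := by
    simp_rw [real_inner_comm m]
    rw [integral_inner hint, ← hm, real_inner_self_eq_norm_sq]
  have hlin : Integrable (fun ω => 2 * ⟪X ω, m⟫) μ := (hint.inner_const m).const_mul 2
  simp_rw [norm_sub_sq_real]
  rw [integral_add (by exact hsq.sub hlin) (integrable_const _), integral_sub hsq hlin,
    integral_const_mul, hinner, integral_const]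
  simp only [probReal_univ, one_smul]
  ring

/-- Lemma 5 of the paper.
If `f` is differentiable with global minimizer `x*`, `(G x)_x` is a stochastic gradient
family for `f` (square-integrable, `E[G x] = ∇f x`), and `(f, G)` is `L`-`λ(σ²)` smooth,
i.e. `E‖G x‖² ≤ 2L (f x − f x*) + lam ‖x − x*‖² + σ²` for all `x`, then with
`σ_v² = ⨅ x, E‖G x − ∇f x‖²` we have, for every `x`,
`f(x) − f(x*) ≥ (‖∇f(x)‖² − lam ‖x − x*‖² − (σ² − σ_v²)) / (2L)`. -/
theorem stmt5 {Ω : Type*} [MeasurableSpace Ω] (μ : Measure Ω) [IsProbabilityMeasure μ]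
    {d : ℕ} (f : EuclideanSpace ℝ (Fin d) → ℝ) (hf : Differentiable ℝ f)
    (xstar : EuclideanSpace ℝ (Fin d)) (hmin : ∀ x, f xstar ≤ f x)
    (G : EuclideanSpace ℝ (Fin d) → Ω → EuclideanSpace ℝ (Fin d))
    (hGmeas : ∀ x, Measurable (G x))
    (hGL2 : ∀ x, MemLp (G x) 2 μ)
    (hGmean : ∀ x, ∫ ω, G x ω ∂μ = gradient f x)
    (L lam σ2 : ℝ) (hL : 0 < L) (hlam : 0 ≤ lam) (hσ2 : 0 ≤ σ2)
    (hsmooth : ∀ x, ∫ ω, ‖G x ω‖ ^ 2 ∂μ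
        ≤ 2 * L * (f x - f xstar) + lam * ‖x - xstar‖ ^ 2 + σ2)
    (σv2 : ℝ) (hσv2 : σv2 = ⨅ y, ∫ ω, ‖G y ω - gradient f y‖ ^ 2 ∂μ) :
    ∀ x, (‖gradient f x‖ ^ 2 - lam * ‖x - xstar‖ ^ 2 - (σ2 - σv2)) / (2 * L)
        ≤ f x - f xstar := by
  intro x
  have hvar := integral_norm_sub_integral_sq (hGL2 x)
  rw [hGmean] at hvar
  have hinf : σv2 ≤ ∫ ω, ‖G x ω - gradient f x‖ ^ 2 ∂μ := by
    rw [hσv2]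
    refine ciInf_le ⟨0, ?_⟩ x
    rintro _ ⟨y, rfl⟩
    exact integral_nonneg fun ω => sq_nonneg _
  rw [div_le_iff₀ (by positivity)]
  linarith [hsmooth x]
end

section
/- Let f: ℝ^d → ℝ be differentiable with a global minimizer x*, μ-strongly quasi-convex with μ > 0, and let (g(x))_{x∈ℝ^d} be a stochastic gradient family such that (f, (g(x))) is L-λ(σ²) smooth with L > 0 and λ ≥ 0; set σ_v² = inf_x E‖g(x) − ∇f(x)‖². For any x ∈ ℝ^d, any integer m ≥ 1, and any step-size 0 < α ≤ 1/L, letting avg_m(x) be the average of m i.i.d. copies of g(x): E‖x − α·avg_m(x) − x*‖² ≤ [1 − (μ − λ/L)·α − μ²·α·(1/L − α)]·‖x − x*‖² + (α/L)·(σ² − σ_v²) + α²σ_v²/m. -/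
open MeasureTheory ProbabilityTheory RealInnerProductSpace

/-- Bias-variance decomposition of the second moment about a point. -/
lemma integral_norm_sub_sq_eq_add {Ω E : Type*} [MeasurableSpace Ω] {P : Measure Ω}
    [IsProbabilityMeasure P] [NormedAddCommGroup E] [InnerProductSpace ℝ E] [CompleteSpace E]
    {X : Ω → E} (hX : MemLp X 2 P) (c : E) :
    ∫ ω, ‖X ω - c‖ ^ 2 ∂P = ∫ ω, ‖X ω - ∫ ω', X ω' ∂P‖ ^ 2 ∂P + ‖∫ ω, X ω ∂P - c‖ ^ 2 := by
  set a := ∫ ω, X ω ∂P with ha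
  have hY : MemLp (fun ω => X ω - a) 2 P := hX.sub (memLp_const a)
  have hY1 : Integrable (fun ω => X ω - a) P := hY.integrable one_le_two
  have hsq : Integrable (fun ω => ‖X ω - a‖ ^ 2) P := hY.integrable_norm_pow two_ne_zero
  have hin : Integrable (fun ω => ⟪a - c, X ω - a⟫) P := hY1.const_inner _
  have hzero : ∫ ω, ⟪a - c, X ω - a⟫ ∂P = 0 := by
    rw [integral_inner hY1, integral_sub (hX.integrable one_le_two) (integrable_const a)]
    simp [ha]
  have hexp : ∀ ω, ‖X ω - c‖ ^ 2
      = ‖X ω - a‖ ^ 2 + 2 * ⟪a - c, X ω - a⟫ + ‖a - c‖ ^ 2 := fun ω => by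
    rw [← sub_add_sub_cancel (X ω) a c, norm_add_sq_real, real_inner_comm]
  simp_rw [hexp]
  rw [integral_add (hsq.fun_add (hin.const_mul 2)) (integrable_const _),
    integral_add hsq (hin.const_mul 2), integral_const_mul, hzero]
  simp

/-- The variance of a sum of independent square-integrable vectors is the sum of the variances. -/
lemma ProbabilityTheory.iIndepFun.integral_norm_sum_sub_sq {Ω E ι : Type*} [MeasurableSpace Ω]
    {P : Measure Ω} [IsProbabilityMeasure P] [NormedAddCommGroup E] [InnerProductSpace ℝ E]
    [CompleteSpace E] [MeasurableSpace E] [BorelSpace E] [Fintype ι] {X : ι → Ω → E}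
    (hind : iIndepFun X P) (hX : ∀ i, MemLp (X i) 2 P) :
    ∫ ω, ‖∑ i, (X i ω - ∫ ω', X i ω' ∂P)‖ ^ 2 ∂P
      = ∑ i, ∫ ω, ‖X i ω - ∫ ω', X i ω' ∂P‖ ^ 2 ∂P := by
  classical
  set Y : ι → Ω → E := fun i ω => X i ω - ∫ ω', X i ω' ∂P with hYdef
  have hY : ∀ i, MemLp (Y i) 2 P := fun i => (hX i).sub (memLp_const _)
  have hY1 : ∀ i, Integrable (Y i) P := fun i => (hY i).integrable one_le_two
  have hY0 : ∀ i, ∫ ω, Y i ω ∂P = 0 := fun i => by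
    simp only [hYdef]
    rw [integral_sub ((hX i).integrable one_le_two) (integrable_const _)]
    simp
  have hYind : iIndepFun Y P :=
    hind.comp (fun i v => v - ∫ ω', X i ω' ∂P) fun i => (continuous_sub_right _).measurable
  have hint : ∀ i j, Integrable (fun ω => ⟪Y i ω, Y j ω⟫) P := fun i j => by
    by_cases hij : i = j
    · subst hij
      simpa only [real_inner_self_eq_norm_sq] using (hY i).integrable_norm_pow two_ne_zero
    · exact (hYind.indepFun hij).integrable_bilin (hY1 i) (hY1 j) (innerSL ℝ)
  have hcross : ∀ i j, i ≠ j → ∫ ω, ⟪Y i ω, Y j ω⟫ ∂P = 0 := fun i j hij => by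
    have hprod := (hYind.indepFun hij).integral_bilin (hY1 i) (hY1 j) (innerSL ℝ)
    rw [hY0 i, map_zero] at hprod
    exact hprod
  change ∫ ω, ‖∑ i, Y i ω‖ ^ 2 ∂P = ∑ i, ∫ ω, ‖Y i ω‖ ^ 2 ∂P
  simp_rw [← real_inner_self_eq_norm_sq, sum_inner, inner_sum]
  rw [integral_finsetSum _ fun i _ => integrable_finsetSum _ fun j _ => hint i j]
  refine Finset.sum_congr rfl fun i _ => ?_
  rw [integral_finsetSum _ fun j _ => hint i j]
  exact Finset.sum_eq_single i (fun j _ hj => hcross i j hj.symm) (by simp)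

/-- The variance of the average of `m` i.i.d. copies is the variance divided by `m`. -/
lemma integral_norm_average_sub_sq {Ω E : Type*} [MeasurableSpace Ω] {P : Measure Ω}
    [IsProbabilityMeasure P] [NormedAddCommGroup E] [InnerProductSpace ℝ E] [CompleteSpace E]
    [MeasurableSpace E] [BorelSpace E] {m : ℕ} (hm : 0 < m) {X : Fin m → Ω → E} {Z : Ω → E}
    (hind : iIndepFun X P) (hident : ∀ i, IdentDistrib (X i) Z P P) (hZ : MemLp Z 2 P) :
    ∫ ω, ‖(m : ℝ)⁻¹ • ∑ i, X i ω - ∫ ω', Z ω' ∂P‖ ^ 2 ∂P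
      = (∫ ω, ‖Z ω - ∫ ω', Z ω' ∂P‖ ^ 2 ∂P) / m := by
  have hX : ∀ i, MemLp (X i) 2 P := fun i => (hident i).memLp_iff.2 hZ
  have hm' : (m : ℝ) ≠ 0 := by positivity
  have hsum := hind.integral_norm_sum_sub_sq hX
  simp only [fun i => (hident i).integral_eq] at hsum
  set a := ∫ ω, Z ω ∂P
  have hvar : ∀ i, ∫ ω, ‖X i ω - a‖ ^ 2 ∂P = ∫ ω, ‖Z ω - a‖ ^ 2 ∂P := fun i =>
    ((hident i).comp (u := fun v => ‖v - a‖ ^ 2)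
      ((continuous_sub_right a).norm.pow 2).measurable).integral_eq
  have hpt : ∀ ω, ‖(m : ℝ)⁻¹ • ∑ i, X i ω - a‖ ^ 2
      = ((m : ℝ)⁻¹) ^ 2 * ‖∑ i, (X i ω - a)‖ ^ 2 := fun ω => by
    have : (m : ℝ)⁻¹ • ∑ i, X i ω - a = (m : ℝ)⁻¹ • ∑ i, (X i ω - a) := by
      rw [Finset.sum_sub_distrib, smul_sub]
      simp [← Nat.cast_smul_eq_nsmul ℝ, smul_smul, hm']
    rw [this, norm_smul, mul_pow, Real.norm_eq_abs, sq_abs]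
  simp_rw [hpt]
  rw [integral_const_mul, hsum]
  simp only [hvar, Finset.sum_const, Finset.card_univ, Fintype.card_fin, nsmul_eq_mul]
  field_simp

/-- A strongly quasi-convex function grows at least quadratically away from its minimizer. -/
lemma quadratic_growth_of_strongly_quasiConvex {E : Type*} [NormedAddCommGroup E]
    [InnerProductSpace ℝ E] [CompleteSpace E] {f : E → ℝ} (hf : Differentiable ℝ f) {xstar : E}
    (hmin : ∀ x, f xstar ≤ f x) {μ : ℝ}
    (hsqc : ∀ x, f x + ⟪gradient f x, xstar - x⟫ + μ / 2 * ‖xstar - x‖ ^ 2 ≤ f xstar) (x : E) :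
    μ / 2 * ‖x - xstar‖ ^ 2 ≤ f x - f xstar := by
  set u := x - xstar with hu
  set k := μ / 2 * ‖u‖ ^ 2 with hk
  let φ : ℝ → ℝ := fun t => f (xstar + t • u) - f xstar
  have hφ : ∀ t, HasDerivAt φ ⟪gradient f (xstar + t • u), u⟫ t := fun t => by
    have hline : HasDerivAt (fun t : ℝ => xstar + t • u) u t := by
      simpa using ((hasDerivAt_id t).smul_const u).const_add xstar
    exact ((hf _).hasGradientAt.hasFDerivAt.comp_hasDerivAt t hline).sub_const (f xstar)
  have hψ : ∀ t, 0 < t → HasDerivAt (fun t => φ t / t - k * t)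
      ((⟪gradient f (xstar + t • u), u⟫ * t - φ t * 1) / t ^ 2 - k * 1) t := fun t ht => by
    exact ((hφ t).div (hasDerivAt_id t) ht.ne').sub ((hasDerivAt_id t).const_mul k)
  have hmono : MonotoneOn (fun t => φ t / t - k * t) (Set.Ioi 0) := by
    refine monotoneOn_of_hasDerivWithinAt_nonneg (convex_Ioi 0)
      (fun t ht => (hψ t ht).continuousAt.continuousWithinAt)
      (fun t ht => (hψ t (interior_subset ht)).hasDerivWithinAt) fun t ht => ?_
    have ht : 0 < t := interior_subset ht
    rw [sub_nonneg, mul_one, le_div_iff₀ (by positivity)]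
    have h := hsqc (xstar + t • u)
    rw [sub_add_cancel_left, inner_neg_right, inner_smul_right, norm_neg, norm_smul, mul_pow,
      Real.norm_eq_abs, sq_abs] at h
    simp only [φ, hk]
    linarith
  have hφ1 : φ 1 = f x - f xstar := by simp [φ, hu]
  have hlow : ∀ t ∈ Set.Ioc (0 : ℝ) 1, k - k * t ≤ φ 1 := fun t ht => by
    have h := hmono (Set.mem_Ioi.2 ht.1) (Set.mem_Ioi.2 one_pos) ht.2
    have hnonneg : 0 ≤ φ t / t := div_nonneg (sub_nonneg.2 (hmin _)) ht.1.le
    simp only [div_one, mul_one] at h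
    linarith
  have hlim : Filter.Tendsto (fun t : ℝ => k - k * t) (nhdsWithin 0 (Set.Ioi 0)) (nhds k) := by
    have hc : Continuous fun t : ℝ => k - k * t := by fun_prop
    simpa using (hc.tendsto 0).mono_left nhdsWithin_le_nhds
  rw [← hφ1]
  exact le_of_tendsto hlim
    (Filter.eventually_of_mem (Ioc_mem_nhdsGT one_pos) hlow)

/-- one-step contraction inequality of the paper's Theorem 2.
Let `f` be differentiable with global minimizer `x*`, `μ`-strongly quasi-convex
(`μ > 0`), and let `(G x)_x` be a stochastic gradient family such that `(f, G)` is
`L`-`lam(σ²)` smooth with `L > 0`, `lam ≥ 0`; `σ_v² = ⨅ x, E‖G x − ∇f x‖²`.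
For any `x`, any `m ≥ 1`, and any step-size `0 < α ≤ 1/L`, letting `avg_m(x)` be the
average of `m` i.i.d. copies `h i` of `G x`:
`E‖x − α avg_m(x) − x*‖² ≤ (1 − (μ − lam/L)α − μ²α(1/L − α)) ‖x − x*‖²
  + (α/L)(σ² − σ_v²) + α²σ_v²/m`. -/
theorem stmt6 {Ω : Type*} [MeasurableSpace Ω] (P : Measure Ω) [IsProbabilityMeasure P]
    {d : ℕ} (f : EuclideanSpace ℝ (Fin d) → ℝ) (hf : Differentiable ℝ f)
    (xstar : EuclideanSpace ℝ (Fin d)) (hmin : ∀ x, f xstar ≤ f x)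
    (μ L lam σ2 : ℝ) (hμ : 0 < μ) (hL : 0 < L) (hlam : 0 ≤ lam)
    (hsqc : ∀ x, f x + ⟪gradient f x, xstar - x⟫ + μ / 2 * ‖xstar - x‖ ^ 2 ≤ f xstar)
    (G : EuclideanSpace ℝ (Fin d) → Ω → EuclideanSpace ℝ (Fin d))
    (hGmeas : ∀ x, Measurable (G x))
    (hGL2 : ∀ x, MemLp (G x) 2 P)
    (hGmean : ∀ x, ∫ ω, G x ω ∂P = gradient f x)
    (hsmooth : ∀ x, ∫ ω, ‖G x ω‖ ^ 2 ∂P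
        ≤ 2 * L * (f x - f xstar) + lam * ‖x - xstar‖ ^ 2 + σ2)
    (σv2 : ℝ) (hσv2 : σv2 = ⨅ y, ∫ ω, ‖G y ω - gradient f y‖ ^ 2 ∂P)
    (x : EuclideanSpace ℝ (Fin d)) (m : ℕ) (hm : 0 < m)
    (h : Fin m → Ω → EuclideanSpace ℝ (Fin d))
    (hmeas : ∀ i, Measurable (h i))
    (hiid : iIndepFun h P)
    (hcopy : ∀ i, IdentDistrib (h i) (G x) P P)
    (α : ℝ) (hα0 : 0 < α) (hα : α ≤ 1 / L) :
    ∫ ω, ‖x - α • ((m : ℝ)⁻¹ • ∑ i, h i ω) - xstar‖ ^ 2 ∂P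
      ≤ (1 - (μ - lam / L) * α - μ ^ 2 * α * (1 / L - α)) * ‖x - xstar‖ ^ 2
        + α / L * (σ2 - σv2) + α ^ 2 * σv2 / m := by
  set g := gradient f x with hg
  set V := ∫ ω, ‖G x ω - g‖ ^ 2 ∂P with hV
  set D := ‖x - xstar‖ ^ 2 with hD
  have hVσ : σv2 ≤ V := hσv2 ▸ ciInf_le
    ⟨0, Set.forall_mem_range.2 fun y => integral_nonneg fun ω => sq_nonneg _⟩ x
  have hsecond : ‖g‖ ^ 2 + V ≤ 2 * L * (f x - f xstar) + lam * D + σ2 := by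
    have h0 := integral_norm_sub_sq_eq_add (hGL2 x) 0
    simp only [sub_zero, hGmean x] at h0
    linarith [hsmooth x]
  have hinner : f x - f xstar + μ / 2 * D ≤ ⟪g, x - xstar⟫ := by
    have h0 := hsqc x
    rw [← neg_sub x xstar, inner_neg_right, norm_neg] at h0
    linarith
  have hgrad : μ ^ 2 * D ≤ ‖g‖ ^ 2 := by
    have hgrow := quadratic_growth_of_strongly_quasiConvex hf hmin hsqc x
    have hnn : 0 ≤ ‖g - μ • (x - xstar)‖ ^ 2 := sq_nonneg _
    rw [norm_sub_sq_real, inner_smul_right, norm_smul, mul_pow, Real.norm_eq_abs, sq_abs] at hnn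
    nlinarith
  have hstep : ∫ ω, ‖x - α • ((m : ℝ)⁻¹ • ∑ i, h i ω) - xstar‖ ^ 2 ∂P
      = α ^ 2 * (V / m) + (D - 2 * α * ⟪g, x - xstar⟫ + α ^ 2 * ‖g‖ ^ 2) := by
    have hL2 : MemLp (fun ω => (m : ℝ)⁻¹ • ∑ i, h i ω) 2 P :=
      (memLp_finsetSum Finset.univ fun i _ =>
        (hcopy i).memLp_iff.2 (hGL2 x)).const_smul (m : ℝ)⁻¹
    have hmean : ∫ ω, (m : ℝ)⁻¹ • ∑ i, h i ω ∂P = g := by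
      have hm' : (m : ℝ) ≠ 0 := by positivity
      rw [integral_smul, integral_finsetSum _ fun i _ =>
        ((hcopy i).memLp_iff.2 (hGL2 x)).integrable one_le_two]
      simp [fun i => (hcopy i).integral_eq, hGmean, ← Nat.cast_smul_eq_nsmul ℝ, smul_smul, hm',
        hg]
    have hvar := integral_norm_average_sub_sq hm hiid hcopy (hGL2 x)
    have hbias := integral_norm_sub_sq_eq_add hL2 (α⁻¹ • (x - xstar))
    rw [hmean] at hbias
    rw [hGmean x] at hvar
    rw [hvar] at hbias
    have hscale : ∀ v : EuclideanSpace ℝ (Fin d),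
        ‖x - α • v - xstar‖ ^ 2 = α ^ 2 * ‖v - α⁻¹ • (x - xstar)‖ ^ 2 := fun v => by
      have : x - α • v - xstar = -(α • (v - α⁻¹ • (x - xstar))) := by
        rw [smul_sub, smul_inv_smul₀ hα0.ne']
        abel
      rw [this, norm_neg, norm_smul, mul_pow, Real.norm_eq_abs, sq_abs]
    simp_rw [hscale]
    rw [integral_const_mul, hbias, mul_add, ← hscale, sub_right_comm, norm_sub_sq_real,
      inner_smul_right, norm_smul, mul_pow, Real.norm_eq_abs, sq_abs, real_inner_comm]
    ring
  rw [hstep]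
  have hm1 : (1 : ℝ) ≤ m := by exact_mod_cast hm
  have hcoef : 0 ≤ α / L - α ^ 2 / m := by
    have h1 : α ^ 2 / m ≤ α ^ 2 := div_le_self (sq_nonneg α) hm1
    have h2 : α * α ≤ α * (1 / L) := mul_le_mul_of_nonneg_left hα hα0.le
    rw [mul_one_div] at h2
    linarith
  have hmoment := mul_le_mul_of_nonneg_left hsecond (div_pos hα0 hL).le
  have hcancel : α / L * (2 * L * (f x - f xstar) + lam * D + σ2)
      = 2 * α * (f x - f xstar) + lam / L * α * D + α / L * σ2 := by
    field_simp
  rw [hcancel] at hmoment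
  have hdescent := mul_le_mul_of_nonneg_left hinner hα0.le
  have hvariance := mul_le_mul_of_nonneg_left hVσ hcoef
  have hgradient := mul_le_mul_of_nonneg_left hgrad (mul_nonneg hα0.le (sub_nonneg.2 hα))
  linear_combination hmoment + 2 * hdescent + hvariance + hgradient
end

section
/- Let f: ℝ^d → ℝ be differentiable with a global minimizer x*, μ-strongly quasi-convex with μ > 0, and let (g(x))_{x∈ℝ^d} be a stochastic gradient family such that (f, (g(x))) is L-λ(σ²) smooth with L > 0 and λ ≥ 0. For any x ∈ ℝ^d, any integer m ≥ 1, and any α > 0, letting avg_m(x) be the average of m i.i.d. copies of g(x): E‖x − α·avg_m(x) − x*‖² ≤ (1 − μα + λα²/m)·‖x − x*‖² − 2α·(1 − αL/m)·(f(x) − f(x*)) + α²·(1 − 1/m)·‖∇f(x)‖² + α²σ²/m. -/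
open MeasureTheory ProbabilityTheory RealInnerProductSpace

namespace ProbabilityTheory

variable {Ω E : Type*} [MeasurableSpace Ω] {P : Measure Ω} [IsProbabilityMeasure P]
  [NormedAddCommGroup E] [InnerProductSpace ℝ E] [CompleteSpace E]

/-- The second moment of a sum of pairwise independent square-integrable random vectors with
common mean `v` and common second moment `s`. -/
theorem integral_norm_sum_sq_of_pairwise_indepFun [MeasurableSpace E] [BorelSpace E]
    {ι : Type*} [Fintype ι] {h : ι → Ω → E} (hL2 : ∀ i, MemLp (h i) 2 P)
    (hind : Pairwise fun i j ↦ IndepFun (h i) (h j) P) {v : E} {s : ℝ}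
    (hmean : ∀ i, ∫ ω, h i ω ∂P = v) (hsq : ∀ i, ∫ ω, ‖h i ω‖ ^ 2 ∂P = s) :
    ∫ ω, ‖∑ i, h i ω‖ ^ 2 ∂P =
      Fintype.card ι * s + Fintype.card ι * (Fintype.card ι - 1) * ‖v‖ ^ 2 := by
  classical
  have hint i : Integrable (h i) P := (hL2 i).integrable one_le_two
  have hinner i j : Integrable (fun ω ↦ ⟪h i ω, h j ω⟫) P ∧
      ∫ ω, ⟪h i ω, h j ω⟫ ∂P = ‖v‖ ^ 2 + if i = j then s - ‖v‖ ^ 2 else 0 := by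
    rcases eq_or_ne i j with rfl | hij
    · simp only [real_inner_self_eq_norm_sq, if_true, add_sub_cancel, hsq, and_true]
      exact (hL2 i).integrable_norm_pow two_ne_zero
    · refine ⟨(hind hij).integrable_bilin (hint i) (hint j) (innerSL ℝ), ?_⟩
      have := (hind hij).integral_bilin (hint i) (hint j) (innerSL ℝ)
      rw [hmean, hmean] at this
      rw [if_neg hij, add_zero, ← real_inner_self_eq_norm_sq]
      exact this
  simp_rw [← real_inner_self_eq_norm_sq (∑ i, h i _), sum_inner, inner_sum]
  rw [integral_finsetSum _ fun i _ ↦ integrable_finsetSum _ fun j _ ↦ (hinner i j).1]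
  simp_rw [integral_finsetSum _ fun j _ ↦ (hinner _ j).1, (hinner _ _).2,
    Finset.sum_add_distrib]
  simp
  ring

/-- The expected squared distance after a step of length `α` along a random direction `Y`. -/
theorem integral_norm_sub_smul_sq {Y : Ω → E} (hY : MemLp Y 2 P) (u : E) (α : ℝ) :
    ∫ ω, ‖u - α • Y ω‖ ^ 2 ∂P =
      ‖u‖ ^ 2 - 2 * α * ⟪u, ∫ ω, Y ω ∂P⟫ + α ^ 2 * ∫ ω, ‖Y ω‖ ^ 2 ∂P := by
  have hint : Integrable Y P := hY.integrable one_le_two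
  have hexp ω : ‖u - α • Y ω‖ ^ 2 =
      ‖u‖ ^ 2 - 2 * α * ⟪u, Y ω⟫ + α ^ 2 * ‖Y ω‖ ^ 2 := by
    rw [norm_sub_sq_real, inner_smul_right, norm_smul, mul_pow, Real.norm_eq_abs, sq_abs]
    ring
  have hi₁ : Integrable (fun ω ↦ 2 * α * ⟪u, Y ω⟫) P := (hint.const_inner u).const_mul _
  have hi₂ : Integrable (fun ω ↦ α ^ 2 * ‖Y ω‖ ^ 2) P :=
    (hY.integrable_norm_pow two_ne_zero).const_mul _
  simp_rw [hexp]
  have hi₀ : Integrable (fun ω ↦ ‖u‖ ^ 2 - 2 * α * ⟪u, Y ω⟫) P := (integrable_const _).sub hi₁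
  rw [integral_add hi₀ hi₂, integral_sub (integrable_const _) hi₁,
    integral_const_mul, integral_const_mul, integral_inner hint]
  simp

end ProbabilityTheory

/-- intermediate per-step recursion in the proof of the paper's
Theorem 2, valid for every step-size `α > 0`.
With `f` differentiable, global minimizer `x*`, `μ`-strongly quasi-convex (`μ > 0`),
`(G x)_x` a stochastic gradient family, `(f, G)` being `L`-`lam(σ²)` smooth with
`L > 0`, `lam ≥ 0`, and `avg_m(x)` the average of `m` i.i.d. copies `h i` of `G x`:
`E‖x − α avg_m(x) − x*‖² ≤ (1 − μα + lam α²/m) ‖x − x*‖²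
  − 2α (1 − αL/m) (f x − f x*) + α² (1 − 1/m) ‖∇f x‖² + α²σ²/m`. -/
theorem stmt9 {Ω : Type*} [MeasurableSpace Ω] (P : Measure Ω) [IsProbabilityMeasure P]
    {d : ℕ} (f : EuclideanSpace ℝ (Fin d) → ℝ) (hf : Differentiable ℝ f)
    (xstar : EuclideanSpace ℝ (Fin d)) (hmin : ∀ x, f xstar ≤ f x)
    (μ L lam σ2 : ℝ) (hμ : 0 < μ) (hL : 0 < L) (hlam : 0 ≤ lam)
    (hsqc : ∀ x, f x + ⟪gradient f x, xstar - x⟫ + μ / 2 * ‖xstar - x‖ ^ 2 ≤ f xstar)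
    (G : EuclideanSpace ℝ (Fin d) → Ω → EuclideanSpace ℝ (Fin d))
    (hGmeas : ∀ x, Measurable (G x))
    (hGL2 : ∀ x, MemLp (G x) 2 P)
    (hGmean : ∀ x, ∫ ω, G x ω ∂P = gradient f x)
    (hsmooth : ∀ x, ∫ ω, ‖G x ω‖ ^ 2 ∂P
        ≤ 2 * L * (f x - f xstar) + lam * ‖x - xstar‖ ^ 2 + σ2)
    (x : EuclideanSpace ℝ (Fin d)) (m : ℕ) (hm : 0 < m)
    (h : Fin m → Ω → EuclideanSpace ℝ (Fin d))
    (hmeas : ∀ i, Measurable (h i))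
    (hiid : iIndepFun h P)
    (hcopy : ∀ i, IdentDistrib (h i) (G x) P P)
    (α : ℝ) (hα0 : 0 < α) :
    ∫ ω, ‖x - α • ((m : ℝ)⁻¹ • ∑ i, h i ω) - xstar‖ ^ 2 ∂P
      ≤ (1 - μ * α + lam * α ^ 2 / m) * ‖x - xstar‖ ^ 2
        - 2 * α * (1 - α * L / m) * (f x - f xstar)
        + α ^ 2 * (1 - 1 / (m : ℝ)) * ‖gradient f x‖ ^ 2
        + α ^ 2 * σ2 / m := by
  have hm' : (0 : ℝ) < m := by exact_mod_cast hm
  have hL2 i : MemLp (h i) 2 P := (hcopy i).memLp_iff.2 (hGL2 x)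
  have hmean i : ∫ ω, h i ω ∂P = gradient f x := (hcopy i).integral_eq.trans (hGmean x)
  have hsq i : ∫ ω, ‖h i ω‖ ^ 2 ∂P = ∫ ω, ‖G x ω‖ ^ 2 ∂P :=
    ((hcopy i).comp (measurable_norm.pow_const 2)).integral_eq
  have hsum := integral_norm_sum_sq_of_pairwise_indepFun hL2
    (fun i j hij ↦ hiid.indepFun hij) hmean hsq
  have hmean_sum : ∫ ω, ∑ i, h i ω ∂P = (m : ℝ) • gradient f x := by
    rw [integral_finsetSum _ fun i _ ↦ (hL2 i).integrable one_le_two]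
    simp [hmean, Nat.cast_smul_eq_nsmul]
  have hL2_sum : MemLp (fun ω ↦ ∑ i, h i ω) 2 P := memLp_finsetSum _ fun i _ ↦ hL2 i
  have hstep := integral_norm_sub_smul_sq hL2_sum (x - xstar) (α * (m : ℝ)⁻¹)
  rw [hmean_sum, hsum, inner_smul_right, Fintype.card_fin] at hstep
  have hqc := hsqc x
  rw [← neg_sub x xstar, inner_neg_right, norm_neg, real_inner_comm] at hqc
  simp_rw [smul_smul, sub_right_comm x _ xstar]
  rw [hstep]
  have hdescent := mul_nonneg (by positivity : 0 ≤ 2 * α) (sub_nonneg.2 hqc)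
  have hmoment := mul_nonneg (by positivity : 0 ≤ α ^ 2 / m) (sub_nonneg.2 (hsmooth x))
  refine sub_nonneg.1 ((add_nonneg hdescent hmoment).trans_eq ?_)
  field_simp
  ring
end
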